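/- Let μ and ν be finite Borel measures on ℝ with finite first moments such that ∫φ dμ ≤ ∫φ dν for every convex Lipschitz φ : ℝ → ℝ, and let c < d be real numbers. Then the following are equivalent: (1) u_ν(x) > u_μ(x) for every x ∈ (c,d), where u_λ(x) := ∫|x−y| λ(dy); (2) for every convex Lipschitz φ : ℝ → ℝ with ∫φ dν = ∫φ dμ, there exists an affine function a : ℝ → ℝ such that φ(x) = a(x) for all x ∈ (c,d). -/

import Mathlib

/-! Write `D = u_ν - u_μ`, which is nonnegative by the convex order.

If `D` vanishes at `x ∈ (c,d)`, then `y ↦ |x - y|` has equal integrals without being affine on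
`(c,d)`; this gives one implication.

For the other one, let `φ` have equal integrals. Affine functions have equal integrals, and if a sum
of convex Lipschitz functions has equal integrals, then so does each summand. Let `a ≤ b`, let `p` be
a subgradient of `φ` at `a` and `q` one at `b`. Removing from `φ` its part to the left of `a` and its
part to the right of `b` (`split`, applied twice) leaves a convex function with equal integrals whose
second derivative is that of `φ` on `[a,b]`. Up to an affine function it differs from
`x ↦ (q - p) * max (t - x) 0` by at most `(q - p) * (b - a)` for any `t ∈ [a,b]`, so that
`(q - p) * D t ≤ 2 * (q - p) * (b - a) * (μ ℝ + ν ℝ)` (`slope_estimate`). When `D t > 0` and `b - a` is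
small this forces `q = p`. Hence subgradients of `φ` are locally constant on `(c,d)`, so constant by
connectedness, and `φ` is affine there. -/

open MeasureTheory Set Filter Topology

noncomputable section

/-- A function `φ : ℝ → ℝ` is convex and Lipschitz. -/
def IsConvexLipschitz1 (φ : ℝ → ℝ) : Prop :=
  ConvexOn ℝ Set.univ φ ∧ ∃ K : NNReal, LipschitzWith K φ

lemma IsConvexLipschitz1.integrable {φ : ℝ → ℝ} (h : IsConvexLipschitz1 φ) (μ : Measure ℝ)
    [IsFiniteMeasure μ] (hμ : Integrable (fun x => |x|) μ) : Integrable φ μ := by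
  obtain ⟨-, K, hK⟩ := h
  refine ((integrable_const |φ 0|).add (hμ.const_mul (K : ℝ))).mono'
    hK.continuous.aestronglyMeasurable (ae_of_all _ fun x => ?_)
  have h1 := hK.dist_le_mul x 0
  simp only [Real.dist_eq, sub_zero] at h1
  simp only [Real.norm_eq_abs, Pi.add_apply]
  have := abs_sub_abs_le_abs_sub (φ x) (φ 0)
  linarith

lemma isConvexLipschitz1_affine (m q : ℝ) : IsConvexLipschitz1 (fun x => m * x + q) := by
  refine ⟨⟨convex_univ, fun x _ y _ a b _ _ hab => le_of_eq ?_⟩, ‖m‖₊,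
    LipschitzWith.of_dist_le_mul fun x y => ?_⟩
  · simp only [smul_eq_mul]
    linear_combination (-q) * hab
  · simp only [Real.dist_eq, coe_nnnorm, Real.norm_eq_abs, ← abs_mul]
    apply le_of_eq; congr 1; ring

lemma isConvexLipschitz1_abs (t : ℝ) : IsConvexLipschitz1 (fun x => |t - x|) := by
  refine ⟨⟨convex_univ, fun x _ y _ a b ha hb hab => ?_⟩, 1,
    LipschitzWith.of_dist_le_mul fun x y => ?_⟩
  · simp only [smul_eq_mul]
    have : t - (a * x + b * y) = a * (t - x) + b * (t - y) := by linear_combination (-t) * hab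
    rw [this]
    refine (abs_add_le _ _).trans (le_of_eq ?_)
    rw [abs_mul, abs_mul, abs_of_nonneg ha, abs_of_nonneg hb]
  · simp only [Real.dist_eq, NNReal.coe_one, one_mul]
    refine (abs_abs_sub_abs_le_abs_sub _ _).trans (le_of_eq ?_)
    rw [abs_sub_comm]; congr 1; ring

lemma IsConvexLipschitz1.sub_affine {φ : ℝ → ℝ} (h : IsConvexLipschitz1 φ) (a p : ℝ) :
    IsConvexLipschitz1 (fun x => φ x - φ a - p * (x - a)) := by
  obtain ⟨h1, K, hK⟩ := h
  obtain ⟨h2, L, hL⟩ := isConvexLipschitz1_affine (-p) (p * a - φ a)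
  have e : (fun x => φ x - φ a - p * (x - a)) = fun x => φ x + (-p * x + (p * a - φ a)) := by
    funext x; ring
  rw [e]
  exact ⟨h1.add h2, K + L, hK.add hL⟩

/-- A convex function attaining its minimum at `a` stays convex when it is frozen to the left
of `a`. -/
lemma IsConvexLipschitz1.comp_max {g : ℝ → ℝ} (h : IsConvexLipschitz1 g) {a : ℝ}
    (hg : ∀ x, g a ≤ g x) : IsConvexLipschitz1 (fun x => g (max x a)) := by
  obtain ⟨h1, K, hK⟩ := h
  have hc : ConvexOn ℝ univ (fun x : ℝ => max x a) :=
    (convexOn_id convex_univ).sup (convexOn_const a convex_univ)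
  refine ⟨⟨convex_univ, fun x _ y _ s t hs ht hst => ?_⟩, K, ?_⟩
  · have hmono : g (max (s • x + t • y) a) ≤ g (s • max x a + t • max y a) := by
      have := h1.le_max_of_mem_Icc (mem_univ a) (mem_univ (s • max x a + t • max y a))
        (z := max (s • x + t • y) a)
        ⟨le_max_right _ _, hc.2 (mem_univ x) (mem_univ y) hs ht hst⟩
      rwa [max_eq_right (hg _)] at this
    exact hmono.trans (h1.2 (mem_univ _) (mem_univ _) hs ht hst)
  · simpa [Function.comp_def] using hK.comp (LipschitzWith.id.max_const a)

/-- A convex function attaining its minimum at `a` stays convex when it is frozen to the right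
of `a`. -/
lemma IsConvexLipschitz1.comp_min {g : ℝ → ℝ} (h : IsConvexLipschitz1 g) {a : ℝ}
    (hg : ∀ x, g a ≤ g x) : IsConvexLipschitz1 (fun x => g (min x a)) := by
  obtain ⟨h1, K, hK⟩ := h
  have hc : ConcaveOn ℝ univ (fun x : ℝ => min x a) :=
    (concaveOn_id convex_univ).inf (concaveOn_const a convex_univ)
  refine ⟨⟨convex_univ, fun x _ y _ s t hs ht hst => ?_⟩, K, ?_⟩
  · have hmono : g (min (s • x + t • y) a) ≤ g (s • min x a + t • min y a) := by
      have := h1.le_max_of_mem_Icc (mem_univ (s • min x a + t • min y a)) (mem_univ a)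
        (z := min (s • x + t • y) a)
        ⟨hc.2 (mem_univ x) (mem_univ y) hs ht hst, min_le_right _ _⟩
      rwa [max_eq_left (hg _)] at this
    exact hmono.trans (h1.2 (mem_univ _) (mem_univ _) hs ht hst)
  · simpa [Function.comp_def] using hK.comp (LipschitzWith.id.min_const a)

lemma exists_subgradient {φ : ℝ → ℝ} (h : ConvexOn ℝ univ φ) (x : ℝ) :
    ∃ p, ∀ y, φ x + p * (y - x) ≤ φ y := by
  have hx : x ∈ interior (univ : Set ℝ) := by simp
  refine ⟨derivWithin φ (Ioi x) x, fun y => ?_⟩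
  rcases lt_trichotomy y x with hy | rfl | hy
  · have h1 := (h.slope_le_leftDeriv_of_mem_interior (mem_univ y) hx hy).trans
      (h.leftDeriv_le_rightDeriv_of_mem_interior hx)
    rw [slope_def_field, div_le_iff₀ (by linarith)] at h1
    linarith
  · simp
  · have h1 := h.rightDeriv_le_slope_of_mem_interior hx (mem_univ y) hy
    rw [slope_def_field, le_div_iff₀ (by linarith)] at h1
    linarith

section

variable {μ ν : Measure ℝ}

lemma affine_integral_eq
    (horder : ∀ φ : ℝ → ℝ, IsConvexLipschitz1 φ → ∫ x, φ x ∂μ ≤ ∫ x, φ x ∂ν) (m q : ℝ) :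
    ∫ x, (m * x + q) ∂ν = ∫ x, (m * x + q) ∂μ := by
  have h1 := horder _ (isConvexLipschitz1_affine m q)
  have h2 := horder _ (isConvexLipschitz1_affine (-m) (-q))
  have e : (fun x : ℝ => -m * x + -q) = fun x => -(m * x + q) := by funext x; ring
  rw [e, integral_neg, integral_neg] at h2
  linarith

variable [IsFiniteMeasure μ] [IsFiniteMeasure ν]

/-- Cutting `φ` at a point `a` along a supporting line of slope `p` yields two convex functions,
carrying the second derivative of `φ` to the right and to the left of `a`. Both have equal
integrals if `φ` does. -/
lemma split (hμmom : Integrable (fun x => |x|) μ) (hνmom : Integrable (fun x => |x|) ν)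
    (horder : ∀ φ : ℝ → ℝ, IsConvexLipschitz1 φ → ∫ x, φ x ∂μ ≤ ∫ x, φ x ∂ν)
    {φ g : ℝ → ℝ} (hφ : IsConvexLipschitz1 φ) (heq : ∫ x, φ x ∂ν = ∫ x, φ x ∂μ) (a p : ℝ)
    (hp : ∀ x, φ a + p * (x - a) ≤ φ x) (hg : g = fun x => φ x - φ a - p * (x - a)) :
    (IsConvexLipschitz1 (fun x => g (max x a)) ∧
      ∫ x, g (max x a) ∂ν = ∫ x, g (max x a) ∂μ) ∧
    (IsConvexLipschitz1 (fun x => g (min x a)) ∧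
      ∫ x, g (min x a) ∂ν = ∫ x, g (min x a) ∂μ) := by
  have hgc : IsConvexLipschitz1 g := hg ▸ hφ.sub_affine a p
  have hga : g a = 0 := by simp [hg]
  have hg0 : ∀ x, g a ≤ g x := fun x => by rw [hga, hg]; linarith [hp x]
  have c1 := hgc.comp_max hg0
  have c2 := hgc.comp_min hg0
  have key : φ = fun x => (g (max x a) + g (min x a)) + (p * x + (φ a - p * a)) := by
    funext x
    have : g (max x a) + g (min x a) = g x := by
      rcases le_total x a with h | h <;> simp [h, hga]
    rw [this, hg]; ring
  have hint : ∀ (ρ : Measure ℝ) [IsFiniteMeasure ρ], Integrable (fun x => |x|) ρ →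
      ∫ x, φ x ∂ρ = ∫ x, g (max x a) ∂ρ + ∫ x, g (min x a) ∂ρ
        + ∫ x, (p * x + (φ a - p * a)) ∂ρ := by
    intro ρ _ hρ
    have i1 := c1.integrable ρ hρ
    have i2 := c2.integrable ρ hρ
    have i3 := (isConvexLipschitz1_affine p (φ a - p * a)).integrable ρ hρ
    have i12 : Integrable (fun x => g (max x a) + g (min x a)) ρ := i1.add i2
    rw [← integral_add i1 i2, ← integral_add i12 i3]
    exact congrArg (fun f : ℝ → ℝ => ∫ x, f x ∂ρ) key
  have h1 := hint μ hμmom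
  have h2 := hint ν hνmom
  have h3 := affine_integral_eq horder p (φ a - p * a)
  have h4 := horder _ c1
  have h5 := horder _ c2
  exact ⟨⟨c1, by linarith⟩, c2, by linarith⟩

/-- The increase `q - p` of the subgradients across `[a,b]`, weighted by the gap between the
potentials at `t ∈ [a,b]`, is controlled by the length of the interval. -/
lemma slope_estimate (hμmom : Integrable (fun x => |x|) μ) (hνmom : Integrable (fun x => |x|) ν)
    (horder : ∀ φ : ℝ → ℝ, IsConvexLipschitz1 φ → ∫ x, φ x ∂μ ≤ ∫ x, φ x ∂ν)
    {φ : ℝ → ℝ} (hφ : IsConvexLipschitz1 φ) (heq : ∫ x, φ x ∂ν = ∫ x, φ x ∂μ) {a b t p q : ℝ}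
    (hat : a ≤ t) (htb : t ≤ b) (hpq : p ≤ q)
    (hp : ∀ x, φ a + p * (x - a) ≤ φ x) (hq : ∀ x, φ b + q * (x - b) ≤ φ x) :
    (q - p) * (∫ y, |t - y| ∂ν - ∫ y, |t - y| ∂μ) ≤
      2 * ((q - p) * (b - a)) * (μ.real univ + ν.real univ) := by
  set r := q - p with hr
  have hr0 : 0 ≤ r := by linarith
  obtain ⟨⟨c1, e1⟩, -⟩ := split hμmom hνmom horder hφ heq a p hp rfl
  -- `h` is the part of `φ` to the right of `a`, and `r` is a subgradient of `h` at `b`.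
  set h : ℝ → ℝ := fun x => φ (max x a) - φ a - p * (max x a - a) with hh
  have hhb : h b = φ b - φ a - p * (b - a) := by simp [hh, hat.trans htb]
  have hhr : ∀ x, h b + r * (x - b) ≤ h x := by
    intro x
    have h1 := hq (max x a)
    have h2 : r * x ≤ r * max x a := mul_le_mul_of_nonneg_left (le_max_left _ _) hr0
    rw [hhb]; simp only [hh]
    rw [hr] at h2 ⊢
    linarith
  obtain ⟨-, c2, e2⟩ := split hμmom hνmom horder c1 e1 b r hhr rfl
  set k : ℝ → ℝ := fun x => h (min x b) - h b - r * (min x b - b) with hk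
  have hhb' : h b ≤ r * (b - a) := by
    have := hq a
    rw [hhb, hr]; linarith
  have hh0 : ∀ x, 0 ≤ h x := fun x => by simp only [hh]; linarith [hp (max x a)]
  have hhle : ∀ x ≤ b, h x ≤ h b := by
    intro x hx
    have h1 := c1.1.le_max_of_mem_Icc (mem_univ (min x a)) (mem_univ b) (z := x)
      ⟨min_le_left _ _, hx⟩
    have h2 : h (min x a) = 0 := by simp [hh]
    rwa [h2, max_eq_right (hh0 b)] at h1
  have hbound : ∀ x, r / 2 * |t - x| + (-(r / 2) * x + r / 2 * t) - r * (b - a) ≤ k x ∧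
      k x ≤ r / 2 * |t - x| + (-(r / 2) * x + r / 2 * t) + r * (b - a) := by
    intro x
    have h1 := hhr (min x b)
    have h2 := hh0 (min x b)
    have h3 := hhle (min x b) (min_le_right _ _)
    have m1 : r * a ≤ r * t := mul_le_mul_of_nonneg_left hat hr0
    have m2 : r * t ≤ r * b := mul_le_mul_of_nonneg_left htb hr0
    simp only [hk]
    rcases le_total x b with hx | hx
    · rw [min_eq_left hx] at h1 h2 h3 ⊢
      have m3 : r * x ≤ r * b := mul_le_mul_of_nonneg_left hx hr0
      rcases le_total x t with hxt | hxt
      · rw [abs_of_nonneg (by linarith)]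
        constructor <;> linarith
      · have m4 : r * t ≤ r * x := mul_le_mul_of_nonneg_left hxt hr0
        rw [abs_of_nonpos (by linarith)]
        constructor <;> linarith
    · rw [min_eq_right hx, abs_of_nonpos (by linarith)]
      constructor <;> linarith
  have hint : ∀ (ρ : Measure ℝ) [IsFiniteMeasure ρ], Integrable (fun x => |x|) ρ → ∀ s : ℝ,
      Integrable (fun x => r / 2 * |t - x| + (-(r / 2) * x + r / 2 * t) + s) ρ ∧
      ∫ x, (r / 2 * |t - x| + (-(r / 2) * x + r / 2 * t) + s) ∂ρ =
        r / 2 * ∫ x, |t - x| ∂ρ + ∫ x, (-(r / 2) * x + r / 2 * t) ∂ρ + s * ρ.real univ := by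
    intro ρ _ hρ s
    have i1 := ((isConvexLipschitz1_abs t).integrable ρ hρ).const_mul (r / 2)
    have i2 := (isConvexLipschitz1_affine (-(r / 2)) (r / 2 * t)).integrable ρ hρ
    have i12 : Integrable (fun x => r / 2 * |t - x| + (-(r / 2) * x + r / 2 * t)) ρ := i1.add i2
    refine ⟨i12.add (integrable_const s), ?_⟩
    rw [integral_add i12 (integrable_const s), integral_add i1 i2, integral_const_mul,
      integral_const, smul_eq_mul, mul_comm s]
  obtain ⟨j1, f1⟩ := hint μ hμmom (r * (b - a))
  obtain ⟨j2, f2⟩ := hint ν hνmom (-(r * (b - a)))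
  have h1 := integral_mono (c2.integrable μ hμmom) j1 fun x => (hbound x).2
  have h2 := integral_mono j2 (c2.integrable ν hνmom) fun x => by
    simpa only [sub_eq_add_neg] using (hbound x).1
  have h3 := affine_integral_eq horder (-(r / 2)) (r / 2 * t)
  rw [f1] at h1
  rw [f2] at h2
  linarith

end

/-- `y ↦ |x - y|` is not affine near `x`. -/
lemma abs_not_affine {c d x : ℝ} (hx : x ∈ Ioo c d) :
    ¬ ∃ m q : ℝ, ∀ y ∈ Ioo c d, |x - y| = m * y + q := by
  rintro ⟨m, q, h⟩
  obtain ⟨h1, h2⟩ := hx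
  obtain ⟨e, he, he1, he2⟩ : ∃ e > 0, c < x - e ∧ x + e < d := by
    refine ⟨min (x - c) (d - x) / 2, ?_, ?_, ?_⟩ <;>
      rcases min_cases (x - c) (d - x) with h | h <;> linarith
  have k1 := h x ⟨h1, h2⟩
  have k2 := h (x - e) ⟨he1, by linarith⟩
  have k3 := h (x + e) ⟨by linarith, he2⟩
  rw [sub_self, abs_zero] at k1
  rw [abs_of_nonneg (by linarith)] at k2
  rw [abs_of_nonpos (by linarith)] at k3
  linarith

/-- In dimension one: `u_ν > u_μ` on `(c,d)` iff every convex Lipschitz `φ` with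
`∫ φ dν = ∫ φ dμ` is affine on `(c,d)`. -/
theorem stmt14 (μ ν : Measure ℝ) [IsFiniteMeasure μ] [IsFiniteMeasure ν]
    (hμmom : Integrable (fun x => |x|) μ) (hνmom : Integrable (fun x => |x|) ν)
    (horder : ∀ φ : ℝ → ℝ, IsConvexLipschitz1 φ → ∫ x, φ x ∂μ ≤ ∫ x, φ x ∂ν)
    (c d : ℝ) (hcd : c < d) :
    (∀ x ∈ Set.Ioo c d, ∫ y, |x - y| ∂μ < ∫ y, |x - y| ∂ν) ↔
    (∀ φ : ℝ → ℝ, IsConvexLipschitz1 φ → ∫ x, φ x ∂ν = ∫ x, φ x ∂μ →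
      ∃ m q : ℝ, ∀ x ∈ Set.Ioo c d, φ x = m * x + q) := by
  constructor
  · intro hpos φ hφ heq
    choose s hs using exists_subgradient hφ.1
    have hmono : Monotone s := by
      intro x y hxy
      rcases hxy.eq_or_lt with rfl | hlt
      · exact le_rfl
      · have h1 := hs x y
        have h2 := hs y x
        by_contra! hc
        nlinarith [mul_pos (sub_pos.2 hc) (sub_pos.2 hlt)]
    have hloc : ∀ t ∈ Ioo c d, ∃ e > 0, s (t - e) = s (t + e) := by
      intro t ht
      have hD := sub_pos.2 (hpos t ht)
      set D := ∫ y, |t - y| ∂ν - ∫ y, |t - y| ∂μ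
      set M := μ.real univ + ν.real univ
      have hM : 0 ≤ M := add_nonneg measureReal_nonneg measureReal_nonneg
      -- Any `e` with `4 * e * M < D` works.
      refine ⟨D / (4 * M + 1), by positivity, ?_⟩
      set e := D / (4 * M + 1) with he
      have he0 : 0 < e := by positivity
      have heM : 4 * e * M < D := by
        have : e * (4 * M + 1) = D := by rw [he]; field_simp
        linarith
      have hle := hmono (show t - e ≤ t + e by linarith)
      have := slope_estimate hμmom hνmom horder hφ heq (t := t) (by linarith) (by linarith) hle
        (hs (t - e)) (hs (t + e))
      by_contra hne
      have hlt : 0 < s (t + e) - s (t - e) := sub_pos.2 (lt_of_le_of_ne hle hne)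
      have h3 := mul_lt_mul_of_pos_left heM hlt
      change (s (t + e) - s (t - e)) * D ≤
        2 * ((s (t + e) - s (t - e)) * (t + e - (t - e))) * M at this
      linarith
    have hconst : ∀ x ∈ Ioo c d, ∀ y ∈ Ioo c d, s x = s y := by
      intro x hx y hy
      refine isPreconnected_Ioo.induction₂ (fun x y => s x = s y) (fun t ht => ?_)
        (fun _ _ _ _ _ _ => Eq.trans) (fun _ _ _ _ => Eq.symm) hx hy
      obtain ⟨e, he, hse⟩ := hloc t ht
      filter_upwards [mem_nhdsWithin_of_mem_nhds
        (Icc_mem_nhds (show t - e < t by linarith) (show t < t + e by linarith))] with y hy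
      have h1 := hmono hy.1
      have h2 := hmono hy.2
      have h3 := hmono (show t - e ≤ t by linarith)
      have h4 := hmono (show t ≤ t + e by linarith)
      linarith
    have hz : (c + d) / 2 ∈ Ioo c d := ⟨by linarith, by linarith⟩
    set z := (c + d) / 2
    refine ⟨s z, φ z - s z * z, fun x hx => ?_⟩
    have h1 := hs z x
    have h2 := hs x z
    rw [hconst x hx z hz] at h2
    linarith
  · intro h x hx
    refine lt_of_le_of_ne (horder _ (isConvexLipschitz1_abs x)) fun heq => ?_
    exact abs_not_affine hx (h _ (isConvexLipschitz1_abs x) heq.symm)
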